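/- (Sjöstrand) Let G and H be connected finite simple graphs, let D_g be a distribution on G with D_g(v) ≥ 1 for every vertex v of G, and let D_h be a distribution on H with D_h(w) ≥ 1 for every vertex w of H. Then π(G × H, D_g · D_h) ≤ π(G, D_g) · π(H, D_h). -/

import Mathlib

open scoped BigOperators

/-- A single pebbling move on a simple graph: remove two pebbles from `u`
and add one pebble on an adjacent vertex `v`. -/
def PebMove {V : Type*} [DecidableEq V] (G : SimpleGraph V) (D D' : V → ℕ) : Prop :=
  ∃ u v, G.Adj u v ∧ 2 ≤ D u ∧
    D' = fun w => if w = u then D u - 2 else if w = v then D v + 1 else D w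

/-- `D'` is reachable from `D`: some sequence of pebbling moves starting at `D`
produces a distribution containing `D'`. -/
def Reaches {V : Type*} [DecidableEq V] (G : SimpleGraph V) (D D' : V → ℕ) : Prop :=
  ∃ D'', Relation.ReflTransGen (PebMove G) D D'' ∧ ∀ v, D' v ≤ D'' v

/-- Total number of pebbles of a distribution. -/
def pebTotal {V : Type*} [Fintype V] (D : V → ℕ) : ℕ := ∑ v, D v

/-- The pebbling number of a set `S` of target distributions on `G`:
the least `N` (possibly `∞`) such that every member of `S` is reachable from
every distribution with at least `N` pebbles in total. -/
noncomputable def pebSet {V : Type*} [Fintype V] [DecidableEq V] (G : SimpleGraph V)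
    (S : Set (V → ℕ)) : ℕ∞ :=
  sInf {N : ℕ∞ | ∀ D₀ : V → ℕ, N ≤ (pebTotal D₀ : ℕ∞) → ∀ D ∈ S, Reaches G D₀ D}

/-- The pebbling number of a single target distribution. -/
noncomputable def peb {V : Type*} [Fintype V] [DecidableEq V] (G : SimpleGraph V)
    (D : V → ℕ) : ℕ∞ :=
  pebSet G {D}

/-- The distribution with `t` pebbles on `v` and none elsewhere. -/
def unitDist {V : Type*} [DecidableEq V] (t : ℕ) (v : V) : V → ℕ :=
  fun w => if w = v then t else 0


/-!
Call a weight `c` on the vertices doubling if it at most doubles along each edge; a pebbling move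
never increases the `c`-weighted number of pebbles. For `c = 2 ^ dist v ·` this shows that a stack
of pebbles on `v` has to contain at least `∑ u, D u * 2 ^ dist v u` pebbles before it reaches `D`.

For an everywhere positive target `D`, single stacks are the worst case, so that the pebbling number
is the maximum over `v` of these sums. Call a vertex fat if it holds more pebbles than `D` demands,
and thin if it holds fewer. As long as there are both, take a fat `f` and a thin `t` at minimal
distance. The interior vertices of a geodesic from `f` to `t` are neither fat nor thin, so each of
them holds a pebble, and one move along every edge of the geodesic carries a pebble from `f` to `t`,
whatever its length. In the weight `2 ^ (distance to the fat vertices)` the expense is at most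
`1 + (1 + 2 + ⋯ + 2 ^ dist f t)`, which equals the gain `2 * 2 ^ dist f t`, so the weighted number
of pebbles does not drop; and no new fat vertex appears, so the weight itself can only grow. When no
vertex is fat any more, the weighted number of pebbles leaves no room for a thin vertex.

Distances add up in a box product, so the sums above are multiplicative, and so are their maxima.
-/

section PebMove

open SimpleGraph

variable {V : Type*} [DecidableEq V] {G : SimpleGraph V} {p p' : V → ℕ}

lemma pebMove_iff :
    PebMove G p p' ↔
      ∃ u v, G.Adj u v ∧ 2 ≤ p u ∧ p' + Pi.single u 2 = p + Pi.single v 1 := by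
  refine exists₂_congr fun u v ↦ and_congr_right fun huv ↦ and_congr_right fun hu ↦ ?_
  simp only [funext_iff, Pi.add_apply, Pi.single_apply]
  refine forall_congr' fun w ↦ ?_
  have := huv.ne
  grind

/-- One move along every edge of a path takes two pebbles from its first vertex and one from each
interior vertex, and adds one to its last vertex. The equation counts every vertex of the path
once, including both ends, so that it also holds for the path of length zero. -/
lemma reflTransGen_pebMove_of_isPath {x t : V} {q : G.Walk x t} (hq : q.IsPath)
    (h : p' + (q.support.count ·) + Pi.single x 1 = p + Pi.single t 2) :
    Relation.ReflTransGen (PebMove G) p p' := by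
  induction q generalizing p with
  | nil =>
    suffices p' = p from this ▸ .refl
    ext u
    have := congrFun h u
    simp only [Walk.support_nil, List.count_cons, List.count_nil, Pi.add_apply,
      Pi.single_apply, beq_iff_eq] at this
    grind
  | @cons x z t hxz q ih =>
    obtain ⟨hqpath, hxq⟩ := (Walk.cons_isPath_iff hxz q).1 hq
    have hxt : x ≠ t := fun hxt ↦ hxq (hxt ▸ q.end_mem_support)
    have hx : 2 ≤ p x := by
      have := congrFun h x
      simp only [Walk.support_cons, List.count_cons_self, Pi.add_apply,
        Pi.single_eq_same, Pi.single_eq_of_ne hxt] at this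
      lia
    have hle : Pi.single x 2 ≤ p := fun u ↦ by
      rw [Pi.single_apply]
      grind
    obtain ⟨p₀, rfl⟩ : ∃ p₀, p = p₀ + Pi.single x 2 :=
      ⟨p - Pi.single x 2, (tsub_add_cancel_of_le hle).symm⟩
    have hmove : PebMove G (p₀ + Pi.single x 2) (p₀ + Pi.single z 1) :=
      pebMove_iff.2 ⟨x, z, hxz, hx, add_right_comm ..⟩
    refine .head hmove (ih hqpath ?_)
    ext u
    have := congrFun h u
    simp only [Walk.support_cons, List.count_cons, Pi.add_apply, Pi.single_apply,
      beq_iff_eq] at this ⊢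
    grind

end PebMove

section Doubling

open SimpleGraph

variable {V : Type*} {G : SimpleGraph V} {c : V → ℕ}

/-- A vertex weight that at most doubles along each edge. These are the weights for which no
pebbling move increases the weighted number of pebbles. -/
def IsDoubling (G : SimpleGraph V) (c : V → ℕ) : Prop :=
  ∀ ⦃u v⦄, G.Adj u v → c v ≤ 2 * c u

lemma isDoubling_two_pow_dist (G : SimpleGraph V) (v : V) :
    IsDoubling G fun u ↦ 2 ^ G.dist v u := by
  intro u w huw
  have hdist : G.dist v w ≤ G.dist v u + 1 := by
    have := huw.diff_dist_adj (u := v)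
    lia
  calc 2 ^ G.dist v w ≤ 2 ^ (G.dist v u + 1) := Nat.pow_le_pow_right two_pos hdist
    _ = 2 * 2 ^ G.dist v u := pow_succ' ..

lemma IsDoubling.finset_inf' {ι : Type*} {S : Finset ι} (hS : S.Nonempty) {f : ι → V → ℕ}
    (hf : ∀ i ∈ S, IsDoubling G (f i)) : IsDoubling G fun u ↦ S.inf' hS (f · u) := by
  intro u v huv
  obtain ⟨i, hi, hmin⟩ := S.exists_mem_eq_inf' hS (f · u)
  simp only [hmin]
  exact (Finset.inf'_le _ hi).trans (hf i hi huv)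

lemma IsDoubling.sum_support_add_le (hc : IsDoubling G c) {x y : V} (q : G.Walk x y) :
    (q.support.map c).sum + c x ≤ 2 ^ (q.length + 1) * c x := by
  induction q with
  | nil =>
    simp only [Walk.support_nil, List.map_singleton, List.sum_singleton, Walk.length_nil]
    lia
  | @cons x z y hxz q ih =>
    obtain ⟨m, hm⟩ : ∃ m, 2 ^ (q.length + 1) = m + 1 :=
      Nat.exists_eq_add_of_le' Nat.one_le_two_pow
    have htail : (q.support.map c).sum ≤ m * (2 * c x) := by
      have hz : m * c z ≤ m * (2 * c x) := Nat.mul_le_mul_left m (hc hxz)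
      rw [hm, add_mul] at ih
      lia
    calc ((Walk.cons hxz q).support.map c).sum + c x
        = (q.support.map c).sum + 2 * c x := by
          rw [Walk.support_cons, List.map_cons, List.sum_cons]
          ring
      _ ≤ m * (2 * c x) + 2 * c x := by gcongr
      _ = 2 * (m + 1) * c x := by ring
      _ = 2 ^ ((Walk.cons hxz q).length + 1) * c x := by
        rw [← hm, ← pow_succ', Walk.length_cons]

variable [Fintype V] [DecidableEq V]

lemma IsDoubling.dotProduct_le_of_pebMove (hc : IsDoubling G c) {p p' : V → ℕ}
    (h : PebMove G p p') : p' ⬝ᵥ c ≤ p ⬝ᵥ c := by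
  obtain ⟨u, v, huv, -, h⟩ := pebMove_iff.1 h
  have hsum := congrArg (· ⬝ᵥ c) h
  simp only [add_dotProduct, single_dotProduct, one_mul] at hsum
  have := hc huv
  lia

lemma IsDoubling.dotProduct_le_of_reflTransGen (hc : IsDoubling G c) {p p' : V → ℕ}
    (h : Relation.ReflTransGen (PebMove G) p p') : p' ⬝ᵥ c ≤ p ⬝ᵥ c := by
  induction h with
  | refl => rfl
  | tail _ hmove ih => exact (hc.dotProduct_le_of_pebMove hmove).trans ih

end Doubling

section DotProduct

variable {V : Type*} [Fintype V]

lemma pebTotal_eq_dotProduct_one (p : V → ℕ) : pebTotal p = p ⬝ᵥ 1 :=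
  (dotProduct_one p).symm

lemma count_dotProduct [DecidableEq V] (l : List V) (c : V → ℕ) :
    (l.count ·) ⬝ᵥ c = (l.map c).sum := by
  induction l with
  | nil => simp [dotProduct]
  | cons a l ih =>
    have hcount : ((a :: l).count · : V → ℕ) = Pi.single a 1 + (l.count ·) := by
      ext u
      simp only [List.count_cons, Pi.add_apply, Pi.single_apply, beq_iff_eq]
      grind
    simp [hcount, add_dotProduct, ih]

lemma le_of_le_of_dotProduct_le {p w c : V → ℕ} (hpw : p ≤ w) (hc : ∀ v, 0 < c v)
    (h : w ⬝ᵥ c ≤ p ⬝ᵥ c) : w ≤ p := by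
  by_contra hwp
  obtain ⟨x, hx⟩ : ∃ x, p x < w x := by simpa [Pi.le_def] using hwp
  refine h.not_gt (Finset.sum_lt_sum (fun v _ ↦ ?_) ⟨x, Finset.mem_univ x, ?_⟩)
  · exact Nat.mul_le_mul_right _ (hpw v)
  · exact Nat.mul_lt_mul_of_pos_right hx (hc x)

end DotProduct

section DeliveryCost

variable {V : Type*} {G : SimpleGraph V} {S T : Finset V}

/-- The least number of pebbles from which a stack on a suitable vertex of `S` can move one pebble
to `u`, that is, `2 ^ (distance from S to u)`, in a connected graph. -/
noncomputable def deliveryCost (G : SimpleGraph V) (S : Finset V) (hS : S.Nonempty) (u : V) : ℕ :=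
  S.inf' hS fun a ↦ 2 ^ G.dist a u

lemma isDoubling_deliveryCost (hS : S.Nonempty) : IsDoubling G (deliveryCost G S hS) :=
  .finset_inf' hS fun a _ ↦ isDoubling_two_pow_dist G a

lemma deliveryCost_pos (G : SimpleGraph V) (hS : S.Nonempty) (u : V) : 0 < deliveryCost G S hS u :=
  (Finset.lt_inf'_iff hS).2 fun _ _ ↦ Nat.two_pow_pos _

lemma deliveryCost_le_two_pow_dist (G : SimpleGraph V) (hS : S.Nonempty) {a : V} (ha : a ∈ S)
    (u : V) : deliveryCost G S hS u ≤ 2 ^ G.dist a u :=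
  Finset.inf'_le _ ha

lemma deliveryCost_anti (hS : S.Nonempty) (hST : S ⊆ T) :
    deliveryCost G T (hS.mono hST) ≤ deliveryCost G S hS :=
  fun _ ↦ Finset.inf'_mono _ hST hS

end DeliveryCost

section Push

open SimpleGraph

variable {V : Type*} [DecidableEq V] {G : SimpleGraph V} {p w : V → ℕ} {f t : V}

lemma exists_push_along_geodesic (hft : G.Reachable f t) (hf : 2 ≤ p f)
    (hp : ∀ y, G.dist f y < G.dist f t → 1 ≤ p y) :
    ∃ (p' : V → ℕ) (q : G.Walk f t), q.length = G.dist f t ∧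
      Relation.ReflTransGen (PebMove G) p p' ∧
      p' + (q.support.count ·) + Pi.single f 1 = p + Pi.single t 2 := by
  obtain ⟨q, hq, hlength⟩ := hft.exists_path_of_dist
  have hsupport : ∀ y ∈ q.support, y ≠ t → 1 ≤ p y := fun y hy hyt ↦
    hp y <| hlength ▸
      (dist_le (q.takeUntil y hy)).trans_lt (Walk.length_takeUntil_lt_length hy hyt)
  have hle : (q.support.count ·) + Pi.single f 1 ≤ p + Pi.single t 2 := by
    intro u
    have hcount : q.support.count u ≤ 1 := List.nodup_iff_count_le_one.1 hq.support_nodup u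
    have := hsupport u
    simp only [Pi.add_apply, Pi.single_apply]
    grind [List.count_eq_zero]
  have heq : p + Pi.single t 2 - ((q.support.count ·) + Pi.single f 1) + (q.support.count ·) +
      Pi.single f 1 = p + Pi.single t 2 := by
    rw [add_assoc, tsub_add_cancel_of_le hle]
  exact ⟨_, q, hlength, reflTransGen_pebMove_of_isPath hq heq, heq⟩

variable [Fintype V]

lemma exists_push (hft : G.Reachable f t) (hne : f ≠ t) (hf : 2 ≤ p f)
    (hp : ∀ y, G.dist f y < G.dist f t → 1 ≤ p y) :
    ∃ p', Relation.ReflTransGen (PebMove G) p p' ∧ p' ≤ p + Pi.single t 1 ∧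
      pebTotal p' < pebTotal p ∧
      ∀ c, IsDoubling G c → 2 ^ G.dist f t * c f ≤ c t → p ⬝ᵥ c ≤ p' ⬝ᵥ c := by
  obtain ⟨p', q, hlength, hmoves, hp'⟩ := exists_push_along_geodesic hft hf hp
  have hweight (c : V → ℕ) : p' ⬝ᵥ c + (q.support.map c).sum + c f = p ⬝ᵥ c + 2 * c t := by
    simpa [add_dotProduct, count_dotProduct] using congrArg (· ⬝ᵥ c) hp'
  refine ⟨p', hmoves, fun u ↦ ?_, ?_, fun c hc hct ↦ ?_⟩
  · have hu := congrFun hp' u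
    have ht : 0 < q.support.count t := List.count_pos_iff.2 q.end_mem_support
    simp only [Pi.add_apply, Pi.single_apply] at hu ⊢
    grind
  · have hpos := hft.pos_dist_of_ne hne
    have htotal : pebTotal p' + (q.length + 1) + 1 = pebTotal p + 2 := by
      simpa [pebTotal, dotProduct] using hweight fun _ ↦ 1
    lia
  · have hexpense : (q.support.map c).sum + c f ≤ 2 * c t :=
      calc (q.support.map c).sum + c f ≤ 2 ^ (q.length + 1) * c f := hc.sum_support_add_le q
        _ = 2 * (2 ^ G.dist f t * c f) := by rw [hlength]; ring
        _ ≤ 2 * c t := by gcongr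
    have := hweight c
    lia

lemma exists_push_of_thin (hG : G.Preconnected) (hw : ∀ v, 0 < w v) {F : Finset V}
    (hF : F.Nonempty) (hfat : ∀ v, v ∈ F ↔ w v < p v) {t : V} (ht : p t < w t) :
    ∃ p', Relation.ReflTransGen (PebMove G) p p' ∧ pebTotal p' < pebTotal p ∧
      (∀ v, w v < p' v → v ∈ F) ∧
      p ⬝ᵥ deliveryCost G F hF ≤ p' ⬝ᵥ deliveryCost G F hF := by
  obtain ⟨⟨f, t⟩, hft, hmin⟩ := (F ×ˢ Finset.univ.filter fun v ↦ p v < w v).exists_min_image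
    (fun a ↦ G.dist a.1 a.2) (hF.product ⟨t, by simpa using ht⟩)
  simp only [Finset.mem_product, Finset.mem_filter_univ, and_imp, Prod.forall] at hft hmin
  obtain ⟨hfF, ht⟩ := hft
  have hf := (hfat f).1 hfF
  have hne : f ≠ t := fun h ↦ hf.not_gt (h ▸ ht)
  have hinterior (y : V) (hy : G.dist f y < G.dist f t) : 1 ≤ p y := by
    have hthick : w y ≤ p y := not_lt.1 fun hthin ↦ hy.not_ge (hmin f y hfF hthin)
    exact (hw y).trans_le hthick
  obtain ⟨p', hmoves, hle, htotal, hweight⟩ :=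
    exists_push (hG f t) hne (Nat.lt_of_le_of_lt (hw f) hf) hinterior
  refine ⟨p', hmoves, htotal, fun v hv ↦ (hfat v).2 ?_,
    hweight _ (isDoubling_deliveryCost hF) ?_⟩
  · have := hle v
    simp only [Pi.add_apply, Pi.single_apply] at this
    grind
  · have hcostf : deliveryCost G F hF f ≤ 1 := by
      simpa using deliveryCost_le_two_pow_dist G hF hfF f
    have hcostt : 2 ^ G.dist f t ≤ deliveryCost G F hF t :=
      Finset.le_inf' _ _ fun a ha ↦ Nat.pow_le_pow_right two_pos (hmin a t ha ht)
    exact (mul_le_of_le_one_right' hcostf).trans hcostt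

end Push

section Stacking

/-- The number of pebbles which a stack on the single vertex `v` of a connected graph needs in order
to reach `D`: each pebble arriving at distance `d` uses up `2 ^ d` pebbles of the stack. -/
noncomputable def stackingCost {V : Type*} [Fintype V] (G : SimpleGraph V) (D : V → ℕ) (v : V) :
    ℕ :=
  D ⬝ᵥ fun u ↦ 2 ^ G.dist v u

variable {V : Type*} [Fintype V] [DecidableEq V] {G : SimpleGraph V} {w p : V → ℕ}

lemma stackingCost_le_peb (G : SimpleGraph V) (D : V → ℕ) (v : V) :
    (stackingCost G D v : ℕ∞) ≤ peb G D := by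
  refine le_sInf fun N hN ↦ ?_
  induction N using ENat.recTopCoe with
  | top => exact le_top
  | coe n =>
    have htotal : pebTotal (Pi.single v n) = n := by simp [pebTotal_eq_dotProduct_one]
    obtain ⟨D', hmoves, hD⟩ := hN (Pi.single v n) (by rw [htotal]) D rfl
    refine Nat.cast_le.2 ?_
    calc stackingCost G D v
        ≤ D' ⬝ᵥ fun u ↦ 2 ^ G.dist v u := dotProduct_le_dotProduct_of_nonneg_right hD zero_le
      _ ≤ Pi.single v n ⬝ᵥ fun u ↦ 2 ^ G.dist v u :=
        (isDoubling_two_pow_dist G v).dotProduct_le_of_reflTransGen hmoves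
      _ = n := by simp

lemma reaches_of_stackingCost_le_dotProduct (hG : G.Preconnected) (hw : ∀ v, 0 < w v)
    {S : Finset V} (hS : S.Nonempty) (hfat : ∀ v, w v < p v → v ∈ S)
    (hcost : ∀ v, stackingCost G w v ≤ p ⬝ᵥ deliveryCost G S hS) : Reaches G p w := by
  induction hn : pebTotal p using Nat.strong_induction_on generalizing p S with
  | _ n ih =>
  by_cases hwp : w ≤ p
  · exact ⟨p, .refl, hwp⟩
  obtain ⟨t, ht⟩ : ∃ t, p t < w t := by simpa [Pi.le_def] using hwp
  let F : Finset V := Finset.univ.filter fun v ↦ w v < p v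
  have hmem (v : V) : v ∈ F ↔ w v < p v := Finset.mem_filter_univ v
  have hFS : F ⊆ S := fun v hv ↦ hfat v ((hmem v).1 hv)
  have hF : F.Nonempty := by
    by_contra hempty
    have hpw : p ≤ w := fun v ↦ not_lt.1 fun hv ↦ hempty ⟨v, (hmem v).2 hv⟩
    have ⟨a, ha⟩ := hS
    refine hwp (le_of_le_of_dotProduct_le hpw (deliveryCost_pos G hS) ?_)
    exact (dotProduct_le_dotProduct_of_nonneg_left (deliveryCost_le_two_pow_dist G hS ha)
      zero_le).trans (hcost a)
  obtain ⟨p', hmoves, htotal, hfat', hweight⟩ := exists_push_of_thin hG hw hF hmem ht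
  have hcost' (v : V) : stackingCost G w v ≤ p' ⬝ᵥ deliveryCost G F hF :=
    calc stackingCost G w v ≤ p ⬝ᵥ deliveryCost G S hS := hcost v
      _ ≤ p ⬝ᵥ deliveryCost G F hF :=
        dotProduct_le_dotProduct_of_nonneg_left (deliveryCost_anti hF hFS) zero_le
      _ ≤ p' ⬝ᵥ deliveryCost G F hF := hweight
  obtain ⟨p'', hmoves', hle⟩ := ih _ (hn ▸ htotal) hF hfat' hcost' rfl
  exact ⟨p'', hmoves.trans hmoves', hle⟩

lemma reaches_of_stackingCost_le_pebTotal (hG : G.Connected) (hw : ∀ v, 0 < w v)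
    (hcost : ∀ v, stackingCost G w v ≤ pebTotal p) : Reaches G p w := by
  have hV : (Finset.univ : Finset V).Nonempty := Finset.univ_nonempty_iff.2 hG.nonempty
  refine reaches_of_stackingCost_le_dotProduct hG.preconnected hw hV
    (fun v _ ↦ Finset.mem_univ v) fun v ↦ ?_
  calc stackingCost G w v ≤ pebTotal p := hcost v
    _ = p ⬝ᵥ 1 := pebTotal_eq_dotProduct_one p
    _ ≤ p ⬝ᵥ deliveryCost G Finset.univ hV :=
      dotProduct_le_dotProduct_of_nonneg_left (deliveryCost_pos G hV) zero_le

theorem peb_eq_iSup_stackingCost (hG : G.Connected) (hw : ∀ v, 0 < w v) :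
    peb G w = ⨆ v, (stackingCost G w v : ℕ∞) := by
  refine le_antisymm (sInf_le ?_) (iSup_le (stackingCost_le_peb G w))
  rintro p hp _ rfl
  exact reaches_of_stackingCost_le_pebTotal hG hw fun v ↦
    Nat.cast_le.1 ((le_iSup (fun v ↦ (stackingCost G _ v : ℕ∞)) v).trans hp)

end Stacking

section BoxProd

open SimpleGraph

variable {V W : Type*} {G : SimpleGraph V} {H : SimpleGraph W}

lemma dist_boxProd (hG : G.Preconnected) (hH : H.Preconnected) (x y : V × W) :
    (G □ H).dist x y = G.dist x.1 y.1 + H.dist x.2 y.2 := by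
  rw [SimpleGraph.dist, edist_boxProd, ENat.toNat_add]
  · rfl
  · exact edist_ne_top_iff_reachable.2 (hG _ _)
  · exact edist_ne_top_iff_reachable.2 (hH _ _)

lemma stackingCost_boxProd [Fintype V] [Fintype W] (hG : G.Preconnected) (hH : H.Preconnected)
    (Dg : V → ℕ) (Dh : W → ℕ) (x : V × W) :
    stackingCost (G □ H) (fun y ↦ Dg y.1 * Dh y.2) x =
      stackingCost G Dg x.1 * stackingCost H Dh x.2 := by
  simp only [stackingCost, dotProduct, Finset.sum_mul_sum, Fintype.sum_prod_type,
    dist_boxProd hG hH, pow_add, mul_mul_mul_comm]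

theorem sjostrand_product_general [Fintype V] [DecidableEq V] [Fintype W] [DecidableEq W]
    (hG : G.Connected) (hH : H.Connected) {Dg : V → ℕ} {Dh : W → ℕ}
    (hDg : ∀ v, 1 ≤ Dg v) (hDh : ∀ w, 1 ≤ Dh w) :
    peb (G □ H) (fun p ↦ Dg p.1 * Dh p.2) = peb G Dg * peb H Dh := by
  have hD (p : V × W) : 0 < Dg p.1 * Dh p.2 := Nat.mul_pos (hDg p.1) (hDh p.2)
  rw [peb_eq_iSup_stackingCost hG hDg, peb_eq_iSup_stackingCost hH hDh,
    peb_eq_iSup_stackingCost (hG.boxProd hH) hD]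
  simp only [stackingCost_boxProd hG.preconnected hH.preconnected, Nat.cast_mul, iSup_prod,
    ENat.iSup_mul, ENat.mul_iSup]
  exact iSup_comm

end BoxProd

open SimpleGraph in
/-- Sjöstrand's product theorem: Graham-type inequality for everywhere-positive
target distributions. -/
theorem sjostrand_product {V W : Type*} [Fintype V] [DecidableEq V]
    [Fintype W] [DecidableEq W]
    (G : SimpleGraph V) (H : SimpleGraph W) (hG : G.Connected) (hH : H.Connected)
    (Dg : V → ℕ) (Dh : W → ℕ) (hDg : ∀ v, 1 ≤ Dg v) (hDh : ∀ w, 1 ≤ Dh w) :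
    peb (G □ H) (fun p => Dg p.1 * Dh p.2) ≤ peb G Dg * peb H Dh :=
  (sjostrand_product_general hG hH hDg hDh).le
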